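/- Let δ ∈ ℝ with 1 < δ < 2, let α₀, α₁ ≥ 0, and let b, c : [0,1] → ℝ be continuous. Let u : [0,1] → ℝ be continuously differentiable on [0,1] and three times continuously differentiable on (0,1], with |u''(x)| ≤ C₀ x^{δ−2} and |u'''(x)| ≤ C₀ x^{δ−3} for all 0 < x ≤ 1 and some constant C₀. For an integer N ≥ 2 set h = 1/N and x_j = jh, and define the truncation errors: τ₀ = α₀ u'(0) − (α₀/h)(u(x₁) − u(x₀)); τ_N = −α₁ u'(x_N) + (α₁/h)(u(x_N) − u(x_{N−1})); and for 1 ≤ j ≤ N−1, τ_j = [ −(1/(h^δ Γ(3−δ))) Σ_{k=0}^{j−1} d_{j−k} ( u(x_{k+2}) − 2u(x_{k+1}) + u(x_k) ) + b(x_j) D^ℵ u(x_j) + c(x_j) u(x_j) ] − [ −D*^δ u(x_j) + b(x_j) u'(x_j) + c(x_j) u(x_j) ], where d_r := (max(r,0))^{2−δ} − (max(r−1,0))^{2−δ} and D^ℵ u(x_j) := (u(x_{j+1}) − u(x_j))/h if b(x_j) < 0 and (u(x_j) − u(x_{j−1}))/h if b(x_j) ≥ 0. Then there exists a constant C, independent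 of N and j, such that |τ₀| ≤ C h^{δ−1}, |τ₁| ≤ C, |τ_j| ≤ C (j−1)^{1−δ} for j = 2, …, N−1, and |τ_N| ≤ C α₁ h. -/

import Mathlib

/-- The coefficients `d_r = (max(r,0))^{2−δ} − (max(r−1,0))^{2−δ}` of the standard
discretization of the Caputo derivative of order `δ ∈ (1,2)`. -/
noncomputable def dCoef (δ : ℝ) (r : ℕ) : ℝ :=
  (max (r:ℝ) 0) ^ (2 - δ) - (max ((r:ℝ) - 1) 0) ^ (2 - δ)

/-- First derivative within `[0,1]`. -/
noncomputable def du (u : ℝ → ℝ) : ℝ → ℝ := derivWithin u (Set.Icc 0 1)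

/-- The Caputo fractional derivative of order `δ ∈ (1,2)`:
`D*^δ u (x) = (1/Γ(2-δ)) ∫₀ˣ (x-t)^(1-δ) u''(t) dt`. -/
noncomputable def caputoW (δ : ℝ) (u : ℝ → ℝ) (x : ℝ) : ℝ :=
  (1 / Real.Gamma (2 - δ)) *
    ∫ t in (0:ℝ)..x, (x - t) ^ (1 - δ) * du (du u) t

/-- The truncation error `τ_j` of the finite difference scheme on the uniform mesh
`x_i = i/N`, for `0 ≤ j ≤ N`. -/
noncomputable def trunc (δ α₀ α₁ : ℝ) (b c u : ℝ → ℝ) (N j : ℕ) : ℝ :=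
  let h : ℝ := 1 / N
  let x : ℕ → ℝ := fun i => (i:ℝ) * h
  if j = 0 then α₀ * du u 0 - (α₀ / h) * (u (x 1) - u (x 0))
  else if j = N then -α₁ * du u (x N) + (α₁ / h) * (u (x N) - u (x (N - 1)))
  else
    (-(1 / (h ^ δ * Real.Gamma (3 - δ))) *
        (∑ k ∈ Finset.range j, dCoef δ (j - k) *
          (u (x (k + 2)) - 2 * u (x (k + 1)) + u (x k)))
      + b (x j) * (if b (x j) < 0 then (u (x (j + 1)) - u (x j)) / h
          else (u (x j) - u (x (j - 1))) / h)
      + c (x j) * u (x j))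
    - (-caputoW δ u (x j) + b (x j) * du u (x j) + c (x j) * u (x j))

/-!
The bound `|u''(t)| ≤ C₀ t ^ (δ - 2)` makes `u'` Hölder continuous of order `δ - 1` on `[0, 1]`,
which controls every difference quotient; away from `0`, `u'` is even Lipschitz, whence the better
bound for `τ_N`. The error of the discretized Caputo derivative at `x_j` is a sum over the cells
`[x_k, x_{k+1}]`. On the first cell the integral is compared with a Beta integral and the second
difference is estimated by the Hölder bound, which gives `O(j ^ (1 - δ))`. On every other cell the
second difference quotient is a value of `u''` in `(x_k, x_{k+2})`, so that replacing `u''` by it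
costs `O(h x_k ^ (δ - 3))`, and the powers of `h` cancel against those of the kernel. There remains
the discrete convolution `∑ d_{j-k} k ^ (δ - 3)`, which is `O(j ^ (1 - δ))` because `d_r` decays
like `r ^ (1 - δ)` and `k ^ (δ - 3)` is summable.
-/

open Set MeasureTheory

section MeanValue

variable {f f' : ℝ → ℝ} {a b h x y C p q K : ℝ}

lemma abs_sub_le_sub_of_abs_deriv_le {φ φ' : ℝ → ℝ} (hab : a ≤ b)
    (hf : ContinuousOn f (Icc a b)) (hf' : ∀ t ∈ Ioo a b, HasDerivAt f (f' t) t)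
    (hφ : ContinuousOn φ (Icc a b)) (hφ' : ∀ t ∈ Ioo a b, HasDerivAt φ (φ' t) t)
    (hle : ∀ t ∈ Ioo a b, |f' t| ≤ φ' t) :
    |f b - f a| ≤ φ b - φ a := by
  have le_of_deriv_nonneg {g g' : ℝ → ℝ} (hg : ContinuousOn g (Icc a b))
      (hg' : ∀ t ∈ Ioo a b, HasDerivAt g (g' t) t) (hnonneg : ∀ t ∈ Ioo a b, 0 ≤ g' t) :
      g a ≤ g b := by
    rw [← interior_Icc] at hg' hnonneg
    exact monotoneOn_of_hasDerivWithinAt_nonneg (convex_Icc a b) hg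
      (fun t ht ↦ (hg' t ht).hasDerivWithinAt) hnonneg ⟨le_rfl, hab⟩ ⟨hab, le_rfl⟩ hab
  have hsub : φ a - f a ≤ φ b - f b :=
    le_of_deriv_nonneg (hφ.sub hf) (fun t ht ↦ (hφ' t ht).sub (hf' t ht))
      fun t ht ↦ sub_nonneg.2 ((le_abs_self _).trans (hle t ht))
  have hadd : φ a + f a ≤ φ b + f b :=
    le_of_deriv_nonneg (hφ.add hf) (fun t ht ↦ (hφ' t ht).add (hf' t ht))
      fun t ht ↦ by linarith [(neg_le_abs (f' t)).trans (hle t ht)]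
  exact abs_le.2 ⟨by linarith, by linarith⟩

lemma abs_sub_le_rpow_sub_rpow_of_abs_deriv_le (hp : 0 < p) (hx : 0 ≤ x) (hxy : x ≤ y)
    (hf : ContinuousOn f (Icc x y)) (hf' : ∀ t ∈ Ioo x y, HasDerivAt f (f' t) t)
    (hle : ∀ t ∈ Ioo x y, |f' t| ≤ C * t ^ (p - 1)) :
    |f y - f x| ≤ C / p * (y ^ p - x ^ p) := by
  rw [mul_sub]
  refine abs_sub_le_sub_of_abs_deriv_le (φ := fun t ↦ C / p * t ^ p) hxy hf hf' ?_ ?_ hle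
  · exact continuousOn_const.mul (continuousOn_id.rpow_const fun t _ ↦ .inr hp.le)
  · intro t ht
    refine ((Real.hasDerivAt_rpow_const (.inl (hx.trans_lt ht.1).ne')).const_mul _).congr_deriv ?_
    field_simp

/-- The Hölder estimate follows from the primitive `t ^ p` by subadditivity of `t ↦ t ^ p`. -/
lemma abs_sub_le_rpow_of_abs_deriv_le (hp : 0 < p) (hp1 : p ≤ 1) (hC : 0 ≤ C) (ha : 0 ≤ a)
    (hf : ContinuousOn f (Icc a b)) (hf' : ∀ t ∈ Ioo a b, HasDerivAt f (f' t) t)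
    (hle : ∀ t ∈ Ioo a b, |f' t| ≤ C * t ^ (p - 1)) (hx : x ∈ Icc a b) (hy : y ∈ Icc a b) :
    |f y - f x| ≤ C / p * |y - x| ^ p := by
  wlog hxy : x ≤ y generalizing x y
  · rw [abs_sub_comm, abs_sub_comm y]
    exact this hy hx (le_of_not_ge hxy)
  have hx0 : 0 ≤ x := ha.trans hx.1
  have hIoo : Ioo x y ⊆ Ioo a b := Ioo_subset_Ioo hx.1 hy.2
  have hsubadd : y ^ p ≤ x ^ p + (y - x) ^ p := by
    simpa using Real.rpow_add_le_add_rpow hx0 (sub_nonneg.2 hxy) hp.le hp1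
  calc |f y - f x| ≤ C / p * (y ^ p - x ^ p) :=
        abs_sub_le_rpow_sub_rpow_of_abs_deriv_le hp hx0 hxy (hf.mono (Icc_subset_Icc hx.1 hy.2))
          (fun t ht ↦ hf' t (hIoo ht)) fun t ht ↦ hle t (hIoo ht)
    _ ≤ C / p * |y - x| ^ p := by
        rw [abs_of_nonneg (sub_nonneg.2 hxy)]
        gcongr
        linarith

lemma abs_sub_le_mul_of_abs_deriv_le_rpow (hq : q ≤ 0) (hC : 0 ≤ C) (ha : 0 < a)
    (hf' : ∀ t ∈ Icc a b, HasDerivWithinAt f (f' t) (Icc a b) t)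
    (hle : ∀ t ∈ Icc a b, |f' t| ≤ C * t ^ q) (hx : x ∈ Icc a b) (hy : y ∈ Icc a b) :
    |f y - f x| ≤ C * a ^ q * |y - x| := by
  refine (convex_Icc a b).norm_image_sub_le_of_norm_hasDerivWithin_le hf' (fun t ht ↦ ?_) hx hy
  exact (hle t ht).trans
    (mul_le_mul_of_nonneg_left (Real.rpow_le_rpow_of_nonpos ha ht.1 hq) hC)

lemma abs_diffQuot_sub_deriv_le (hh : 0 < h) (hf : ContinuousOn f (Icc a (a + h)))
    (hf' : ∀ t ∈ Ioo a (a + h), HasDerivAt f (f' t) t)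
    (hosc : ∀ t ∈ Ioo a (a + h), |f' t - f' x| ≤ K) :
    |(f (a + h) - f a) / h - f' x| ≤ K := by
  obtain ⟨ξ, hξ, hslope⟩ := exists_hasDerivAt_eq_slope f f' (lt_add_of_pos_right a hh) hf hf'
  rw [add_sub_cancel_left] at hslope
  exact hslope ▸ hosc ξ hξ

/-- The second forward difference of `f` with step `h` at `x`. -/
noncomputable def secondDiff (f : ℝ → ℝ) (h x : ℝ) : ℝ :=
  f (x + 2 * h) - 2 * f (x + h) + f x

lemma exists_secondDiff_eq_mul_sub (hh : 0 < h) (hf : ContinuousOn f (Icc a (a + 2 * h)))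
    (hf' : ∀ t ∈ Ioo a (a + 2 * h), HasDerivAt f (f' t) t) :
    ∃ ξ ∈ Ioo a (a + h), secondDiff f h a = (f' (ξ + h) - f' ξ) * h := by
  obtain ⟨ξ, hξ, hslope⟩ := exists_hasDerivAt_eq_slope
    (fun t ↦ f (t + h) - f t) (fun t ↦ f' (t + h) - f' t) (lt_add_of_pos_right a hh)
    ((hf.comp (by fun_prop) fun t ht ↦ ⟨by linarith [ht.1], by linarith [ht.2]⟩).sub
      (hf.mono (Icc_subset_Icc_right (by linarith))))
    fun t ht ↦ ((hf' (t + h) ⟨by linarith [ht.1], by linarith [ht.2]⟩).comp_add_const t h).sub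
      (hf' t ⟨ht.1, by linarith [ht.2]⟩)
  refine ⟨ξ, hξ, ?_⟩
  rw [hslope, add_sub_cancel_left, div_mul_cancel₀ _ hh.ne', secondDiff,
    show a + h + h = a + 2 * h by ring]
  ring

lemma exists_secondDiff_eq_mul_sq {f'' : ℝ → ℝ} (hh : 0 < h)
    (hf : ContinuousOn f (Icc a (a + 2 * h)))
    (hf' : ∀ t ∈ Ioo a (a + 2 * h), HasDerivAt f (f' t) t)
    (hf'' : ∀ t ∈ Ioo a (a + 2 * h), HasDerivAt f' (f'' t) t) :
    ∃ η ∈ Ioo a (a + 2 * h), secondDiff f h a = f'' η * h ^ 2 := by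
  obtain ⟨ξ, hξ, hdiff⟩ := exists_secondDiff_eq_mul_sub hh hf hf'
  have hIcc : Icc ξ (ξ + h) ⊆ Ioo a (a + 2 * h) :=
    Icc_subset_Ioo hξ.1 (by linarith [hξ.2])
  obtain ⟨η, hη, hslope⟩ := exists_hasDerivAt_eq_slope f' f'' (lt_add_of_pos_right ξ hh)
    (fun t ht ↦ (hf'' t (hIcc ht)).continuousAt.continuousWithinAt)
    fun t ht ↦ hf'' t (hIcc (Ioo_subset_Icc_self ht))
  refine ⟨η, hIcc (Ioo_subset_Icc_self hη), ?_⟩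
  rw [hdiff, hslope, add_sub_cancel_left]
  field_simp

end MeanValue

section SingularIntegrals

variable {r s x a b h C : ℝ} {f : ℝ → ℝ}

lemma intervalIntegrable_sub_rpow (hr : -1 < r) (x a b : ℝ) :
    IntervalIntegrable (fun t ↦ (x - t) ^ r) volume a b := by
  simpa using
    (intervalIntegral.intervalIntegrable_rpow' (a := x - a) (b := x - b) hr).comp_sub_left x

lemma intervalIntegrable_one_sub_rpow_mul_rpow (hr : -1 < r) (hs : -1 < s) :
    IntervalIntegrable (fun t : ℝ ↦ (1 - t) ^ r * t ^ s) volume 0 1 := by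
  have hbeta := (Complex.betaIntegral_convergent (u := (s + 1 : ℝ)) (v := (r + 1 : ℝ))
    (by rw [Complex.ofReal_re]; linarith) (by rw [Complex.ofReal_re]; linarith)).norm
  refine hbeta.congr fun t ht ↦ ?_
  rw [uIoc_of_le zero_le_one] at ht
  have hexp (q : ℝ) : ((q + 1 : ℝ) : ℂ) - 1 = q := by push_cast; ring
  have hone_sub : 1 - (t : ℂ) = (1 - t : ℝ) := by push_cast; rfl
  have ht1 : 0 ≤ 1 - t := sub_nonneg.2 ht.2
  simp only [hexp, hone_sub, ← Complex.ofReal_cpow ht.1.le, ← Complex.ofReal_cpow ht1, norm_mul,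
    Complex.norm_real, Real.norm_of_nonneg (Real.rpow_nonneg ht.1.le s),
    Real.norm_of_nonneg (Real.rpow_nonneg ht1 r), mul_comm]

lemma sub_rpow_mul_rpow_comp_mul {t : ℝ} (hx : 0 < x) (ht : t ∈ Icc 0 1) :
    (x - x * t) ^ r * (x * t) ^ s = x ^ (r + s) * ((1 - t) ^ r * t ^ s) := by
  rw [show x - x * t = x * (1 - t) by ring, Real.mul_rpow hx.le (sub_nonneg.2 ht.2),
    Real.mul_rpow hx.le ht.1, Real.rpow_add hx]
  ring

lemma intervalIntegrable_sub_rpow_mul_rpow (hr : -1 < r) (hs : -1 < s) (hx : 0 < x) :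
    IntervalIntegrable (fun t ↦ (x - t) ^ r * t ^ s) volume 0 x := by
  have hscaled : IntervalIntegrable (fun t ↦ (x - x * t) ^ r * (x * t) ^ s) volume 0 1 := by
    refine ((intervalIntegrable_one_sub_rpow_mul_rpow hr hs).const_mul (x ^ (r + s))).congr
      fun t ht ↦ ?_
    rw [uIoc_of_le zero_le_one] at ht
    exact (sub_rpow_mul_rpow_comp_mul hx (Ioc_subset_Icc_self ht)).symm
  simpa [mul_div_cancel₀, hx.ne'] using hscaled.comp_mul_left (c := x⁻¹)

lemma integral_sub_rpow_mul_rpow (hx : 0 < x) :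
    ∫ t in (0 : ℝ)..x, (x - t) ^ r * t ^ s =
      x ^ (r + s + 1) * ∫ t in (0 : ℝ)..1, (1 - t) ^ r * t ^ s := by
  have hscale := intervalIntegral.mul_integral_comp_mul_left (a := 0) (b := 1) (c := x)
    (f := fun t ↦ (x - t) ^ r * t ^ s)
  rw [mul_zero, mul_one] at hscale
  have hcongr : EqOn (fun t ↦ (x - x * t) ^ r * (x * t) ^ s)
      (fun t ↦ x ^ (r + s) * ((1 - t) ^ r * t ^ s)) (uIcc 0 1) := by
    rw [uIcc_of_le zero_le_one]
    exact fun t ht ↦ sub_rpow_mul_rpow_comp_mul hx ht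
  rw [← hscale, intervalIntegral.integral_congr hcongr, intervalIntegral.integral_const_mul,
    Real.rpow_add_one hx.ne']
  ring

lemma intervalIntegrable_sub_rpow_mul (hr : -1 < r) (hs : -1 < s) (hx : 0 < x)
    (hf : ContinuousOn f (Ioc 0 x)) (hle : ∀ t ∈ Ioc 0 x, |f t| ≤ C * t ^ s) :
    IntervalIntegrable (fun t ↦ (x - t) ^ r * f t) volume 0 x := by
  refine ((intervalIntegrable_sub_rpow_mul_rpow hr hs hx).const_mul C).mono_fun' ?_ ?_ <;>
    rw [uIoc_of_le hx.le]
  · have hmeas : Measurable fun t : ℝ ↦ (x - t) ^ r := by fun_prop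
    exact hmeas.aestronglyMeasurable.mul (hf.aestronglyMeasurable measurableSet_Ioc)
  · filter_upwards [ae_restrict_mem measurableSet_Ioc] with t ht
    have hkernel : 0 ≤ (x - t) ^ r := Real.rpow_nonneg (sub_nonneg.2 ht.2) _
    rw [norm_mul, Real.norm_of_nonneg hkernel, Real.norm_eq_abs, mul_left_comm]
    exact mul_le_mul_of_nonneg_left (hle t ht) hkernel

/-- For `c ≥ 1` the shifted kernel is dominated by the scaled one, since `c h - t ≥ c (h - t)`;
the remaining integral is a Beta integral. -/
lemma abs_integral_mul_sub_rpow_mul_le {c : ℝ} (hr : -1 < r) (hr0 : r ≤ 0) (hs : -1 < s)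
    (hh : 0 < h) (hc : 1 ≤ c) (hle : ∀ t ∈ Ioc 0 h, |f t| ≤ C * t ^ s) :
    |∫ t in (0 : ℝ)..h, (c * h - t) ^ r * f t| ≤
      C * c ^ r * (h ^ (r + s + 1) * ∫ t in (0 : ℝ)..1, (1 - t) ^ r * t ^ s) := by
  have hc0 : 0 < c := one_pos.trans_le hc
  rw [← integral_sub_rpow_mul_rpow hh, ← intervalIntegral.integral_const_mul, ← Real.norm_eq_abs]
  refine intervalIntegral.norm_integral_le_of_norm_le hh.le ?_
    ((intervalIntegrable_sub_rpow_mul_rpow hr hs hh).const_mul _)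
  filter_upwards [compl_mem_ae_iff.2 (measure_singleton h)] with t hth ht
  have hpos : 0 < h - t := sub_pos.2 (lt_of_le_of_ne ht.2 hth)
  have hdom : c * (h - t) ≤ c * h - t := by nlinarith [ht.1]
  have hkernel : (c * h - t) ^ r ≤ c ^ r * (h - t) ^ r := by
    rw [← Real.mul_rpow hc0.le hpos.le]
    exact Real.rpow_le_rpow_of_nonpos (by positivity) hdom hr0
  rw [norm_mul, Real.norm_of_nonneg (Real.rpow_nonneg (by nlinarith) r), Real.norm_eq_abs]
  calc (c * h - t) ^ r * |f t| ≤ c ^ r * (h - t) ^ r * (C * t ^ s) :=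
        mul_le_mul hkernel (hle t ht) (abs_nonneg _) (by positivity)
    _ = C * c ^ r * ((h - t) ^ r * t ^ s) := by ring

lemma abs_integral_mul_sub_integral_mul_const_le {w g : ℝ → ℝ} {c ε : ℝ} (hab : a ≤ b)
    (hw : IntervalIntegrable w volume a b)
    (hwg : IntervalIntegrable (fun t ↦ w t * g t) volume a b)
    (hw0 : ∀ t ∈ Ioc a b, 0 ≤ w t) (hg : ∀ t ∈ Ioc a b, |g t - c| ≤ ε) :
    |(∫ t in a..b, w t * g t) - (∫ t in a..b, w t) * c| ≤ (∫ t in a..b, w t) * ε := by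
  rw [← intervalIntegral.integral_mul_const, ← intervalIntegral.integral_sub hwg (hw.mul_const c),
    ← intervalIntegral.integral_mul_const, ← Real.norm_eq_abs]
  refine intervalIntegral.norm_integral_le_of_norm_le hab (ae_of_all _ fun t ht ↦ ?_)
    (hw.mul_const ε)
  rw [← mul_sub, norm_mul, Real.norm_of_nonneg (hw0 t ht)]
  exact mul_le_mul_of_nonneg_left (hg t ht) (hw0 t ht)

end SingularIntegrals

section ConvolutionWeights

variable {δ : ℝ} {j k : ℕ}

lemma dCoef_nonneg (hδ : δ ≤ 2) (r : ℕ) : 0 ≤ dCoef δ r := by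
  rw [dCoef, sub_nonneg]
  gcongr
  linarith

lemma dCoef_sub_eq (hkj : k < j) :
    dCoef δ (j - k) = ((j : ℝ) - k) ^ (2 - δ) - ((j : ℝ) - (k + 1 : ℕ)) ^ (2 - δ) := by
  have hkj' : (k : ℝ) + 1 ≤ j := by exact_mod_cast hkj
  rw [dCoef, Nat.cast_sub hkj.le, Nat.cast_add_one, max_eq_left (by linarith),
    max_eq_left (by linarith), sub_sub]

lemma dCoef_le_rpow (hδ1 : 1 ≤ δ) {r : ℕ} (hr : 1 ≤ r) : dCoef δ r ≤ (r : ℝ) ^ (1 - δ) := by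
  have hr' : (1 : ℝ) ≤ r := by exact_mod_cast hr
  have hpow {z : ℝ} (hz : 0 < z) : z ^ (2 - δ) = z ^ (1 - δ) * z := by
    rw [← Real.rpow_add_one hz.ne']
    ring_nf
  rw [dCoef, max_eq_left (by linarith), max_eq_left (by linarith), hpow (by linarith)]
  suffices (r : ℝ) ^ (1 - δ) * (r - 1) ≤ ((r : ℝ) - 1) ^ (2 - δ) by linarith
  rcases hr'.eq_or_lt with hr1 | hr1
  · rw [← hr1, sub_self, mul_zero]
    exact Real.rpow_nonneg le_rfl _
  · rw [hpow (sub_pos.2 hr1)]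
    exact mul_le_mul_of_nonneg_right
      (Real.rpow_le_rpow_of_nonpos (sub_pos.2 hr1) (by linarith) (by linarith)) (by linarith)

lemma sum_dCoef_sub_eq_rpow (hδ : δ < 2) (j : ℕ) :
    ∑ k ∈ Finset.range j, dCoef δ (j - k) = (j : ℝ) ^ (2 - δ) := by
  rw [Finset.sum_congr rfl fun k hk ↦ dCoef_sub_eq (Finset.mem_range.1 hk),
    Finset.sum_range_sub' fun k : ℕ ↦ ((j : ℝ) - k) ^ (2 - δ), sub_self, Nat.cast_zero, sub_zero,
    Real.zero_rpow (by linarith), sub_zero]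

lemma integral_kernel_cell_eq (hδ : δ < 2) {h : ℝ} (hh : 0 ≤ h) (hkj : k < j) :
    ∫ t in (k * h)..((k + 1 : ℕ) * h), (j * h - t) ^ (1 - δ) =
      h ^ (2 - δ) / (2 - δ) * dCoef δ (j - k) := by
  have hkj' : ((k + 1 : ℕ) : ℝ) ≤ j := by exact_mod_cast hkj
  have hkj'' : (k : ℝ) ≤ j := by exact_mod_cast hkj.le
  rw [intervalIntegral.integral_comp_sub_left (fun t ↦ t ^ (1 - δ)),
    integral_rpow (.inl (by linarith)), dCoef_sub_eq hkj, ← sub_mul, ← sub_mul,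
    Real.mul_rpow (sub_nonneg.2 hkj') hh, Real.mul_rpow (sub_nonneg.2 hkj'') hh,
    show 1 - δ + 1 = 2 - δ by ring]
  ring

/-- The nodes `k ≤ j / 2` see the decay of the weights, the others the decay of `k ^ (δ - 3)`. -/
lemma dCoef_mul_rpow_le (hδ1 : 1 ≤ δ) (hδ2 : δ ≤ 2) (hk : 1 ≤ k) (hkj : k < j) :
    dCoef δ (j - k) * (k : ℝ) ^ (δ - 3) ≤
      (j / 2 : ℝ) ^ (1 - δ) * (k : ℝ) ^ (δ - 3) + (j / 2 : ℝ) ^ (δ - 3) * dCoef δ (j - k) := by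
  have hk' : (0 : ℝ) < k := by exact_mod_cast hk
  have hj' : (0 : ℝ) < j / 2 := by
    have : (k : ℝ) < j := by exact_mod_cast hkj
    linarith
  have hd : 0 ≤ dCoef δ (j - k) := dCoef_nonneg hδ2 _
  rcases le_total (k : ℝ) (j / 2) with hle | hle
  · have hweight : dCoef δ (j - k) ≤ (j / 2 : ℝ) ^ (1 - δ) := by
      refine (dCoef_le_rpow hδ1 (Nat.sub_pos_of_lt hkj)).trans ?_
      rw [Nat.cast_sub hkj.le]
      exact Real.rpow_le_rpow_of_nonpos hj' (by linarith) (by linarith)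
    exact (mul_le_mul_of_nonneg_right hweight (by positivity)).trans
      (le_add_of_nonneg_right (by positivity))
  · have hnode : (k : ℝ) ^ (δ - 3) ≤ (j / 2 : ℝ) ^ (δ - 3) :=
      Real.rpow_le_rpow_of_nonpos hj' hle (by linarith)
    rw [mul_comm]
    exact (mul_le_mul_of_nonneg_right hnode hd).trans (le_add_of_nonneg_left (by positivity))

lemma exists_sum_dCoef_mul_rpow_le (hδ1 : 1 ≤ δ) (hδ2 : δ < 2) :
    ∃ Z : ℝ, ∀ j : ℕ, 1 ≤ j →
      ∑ k ∈ Finset.Ico 1 j, dCoef δ (j - k) * (k : ℝ) ^ (δ - 3) ≤ Z * (j : ℝ) ^ (1 - δ) := by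
  have hsummable : Summable fun k : ℕ ↦ (k : ℝ) ^ (δ - 3) :=
    Real.summable_nat_rpow.2 (by linarith)
  refine ⟨(1 / 2) ^ (1 - δ) * ∑' k : ℕ, (k : ℝ) ^ (δ - 3) + (1 / 2) ^ (δ - 3), fun j hj ↦ ?_⟩
  have hj' : (1 : ℝ) ≤ j := by exact_mod_cast hj
  have hnodes : ∑ k ∈ Finset.Ico 1 j, (k : ℝ) ^ (δ - 3) ≤ ∑' k : ℕ, (k : ℝ) ^ (δ - 3) :=
    hsummable.sum_le_tsum _ fun k _ ↦ by positivity
  have hweights : ∑ k ∈ Finset.Ico 1 j, dCoef δ (j - k) ≤ (j : ℝ) ^ (2 - δ) := by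
    rw [← sum_dCoef_sub_eq_rpow hδ2 j, Finset.sum_range_eq_add_Ico _ hj]
    exact le_add_of_nonneg_left (dCoef_nonneg hδ2.le _)
  have hhalf (p : ℝ) : (j / 2 : ℝ) ^ p = (1 / 2) ^ p * (j : ℝ) ^ p := by
    rw [← Real.mul_rpow (by norm_num) (by positivity), one_div_mul_eq_div]
  have hdecay : (j : ℝ) ^ (δ - 3) * (j : ℝ) ^ (2 - δ) ≤ (j : ℝ) ^ (1 - δ) := by
    rw [← Real.rpow_add (by positivity)]
    exact Real.rpow_le_rpow_of_exponent_le hj' (by linarith)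
  calc ∑ k ∈ Finset.Ico 1 j, dCoef δ (j - k) * (k : ℝ) ^ (δ - 3)
      ≤ (j / 2 : ℝ) ^ (1 - δ) * ∑ k ∈ Finset.Ico 1 j, (k : ℝ) ^ (δ - 3) +
          (j / 2 : ℝ) ^ (δ - 3) * ∑ k ∈ Finset.Ico 1 j, dCoef δ (j - k) := by
        rw [Finset.mul_sum, Finset.mul_sum, ← Finset.sum_add_distrib]
        refine Finset.sum_le_sum fun k hk ↦ ?_
        obtain ⟨hk1, hkj⟩ := Finset.mem_Ico.1 hk
        exact dCoef_mul_rpow_le hδ1 hδ2.le hk1 hkj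
    _ ≤ (j / 2 : ℝ) ^ (1 - δ) * ∑' k : ℕ, (k : ℝ) ^ (δ - 3) +
          (j / 2 : ℝ) ^ (δ - 3) * (j : ℝ) ^ (2 - δ) := by gcongr
    _ = (1 / 2) ^ (1 - δ) * (∑' k : ℕ, (k : ℝ) ^ (δ - 3)) * (j : ℝ) ^ (1 - δ) +
          (1 / 2) ^ (δ - 3) * ((j : ℝ) ^ (δ - 3) * (j : ℝ) ^ (2 - δ)) := by
        rw [hhalf, hhalf]
        ring
    _ ≤ _ := by
        rw [add_mul]
        gcongr

end ConvolutionWeights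

section UnitInterval

variable {f : ℝ → ℝ} {x y C q δ : ℝ}

lemma nonneg_of_abs_le_mul_rpow (hle : ∀ x ∈ Ioc (0 : ℝ) 1, |f x| ≤ C * x ^ q) : 0 ≤ C := by
  simpa using (abs_nonneg _).trans (hle 1 ⟨one_pos, le_rfl⟩)

lemma Ioc_eventuallyEq_Icc_nhds (hx : 0 < x) : Ioc (0 : ℝ) 1 =ᶠ[nhds x] Icc 0 1 := by
  filter_upwards [Ioi_mem_nhds hx] with y hy
  exact propext (and_congr_left' ⟨le_of_lt, fun _ ↦ hy⟩)

lemma hasDerivWithinAt_du (hf : DifferentiableOn ℝ f (Ioc 0 1)) (hx : x ∈ Ioc 0 1) :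
    HasDerivWithinAt f (du f x) (Icc 0 1) x :=
  ((differentiableWithinAt_congr_set (Ioc_eventuallyEq_Icc_nhds hx.1)).1
    (hf x hx)).hasDerivWithinAt

lemma hasDerivAt_du (hf : DifferentiableOn ℝ f (Ioc 0 1)) (hx : x ∈ Ioo 0 1) :
    HasDerivAt f (du f x) x :=
  (hasDerivWithinAt_du hf (Ioo_subset_Ioc_self hx)).hasDerivAt (Icc_mem_nhds hx.1 hx.2)

lemma contDiffOn_du {n : ℕ} (hf : ContDiffOn ℝ (n + 1) f (Ioc 0 1)) :
    ContDiffOn ℝ n (du f) (Ioc 0 1) :=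
  (hf.derivWithin (uniqueDiffOn_Ioc 0 1) le_rfl).congr fun _ hx ↦
    (derivWithin_congr_set (Ioc_eventuallyEq_Icc_nhds hx.1)).symm

lemma abs_sub_le_rpow_of_abs_du_le (hδ1 : 1 < δ) (hδ2 : δ ≤ 2) (hf : ContinuousOn f (Icc 0 1))
    (hf' : DifferentiableOn ℝ f (Ioc 0 1))
    (hle : ∀ t ∈ Ioc (0 : ℝ) 1, |du f t| ≤ C * t ^ (δ - 2))
    (hx : x ∈ Icc 0 1) (hy : y ∈ Icc 0 1) :
    |f y - f x| ≤ C / (δ - 1) * |y - x| ^ (δ - 1) := by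
  refine abs_sub_le_rpow_of_abs_deriv_le (sub_pos.2 hδ1) (by linarith)
    (nonneg_of_abs_le_mul_rpow hle) le_rfl hf (fun t ↦ hasDerivAt_du hf') (fun t ht ↦ ?_) hx hy
  rw [show δ - 1 - 1 = δ - 2 by ring]
  exact hle t (Ioo_subset_Ioc_self ht)

end UnitInterval

section DifferenceQuotients

variable {δ C h a x : ℝ} {u : ℝ → ℝ}

lemma abs_diffQuot_sub_du_le (hδ1 : 1 < δ) (hδ2 : δ ≤ 2) (hu : ContDiffOn ℝ 1 u (Icc 0 1))
    (hu' : DifferentiableOn ℝ (du u) (Ioc 0 1))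
    (hle : ∀ t ∈ Ioc (0 : ℝ) 1, |du (du u) t| ≤ C * t ^ (δ - 2))
    (hh : 0 < h) (ha : 0 ≤ a) (hah : a + h ≤ 1) (hx : x ∈ Icc a (a + h)) :
    |(u (a + h) - u a) / h - du u x| ≤ C / (δ - 1) * h ^ (δ - 1) := by
  have hC : 0 ≤ C / (δ - 1) := div_nonneg (nonneg_of_abs_le_mul_rpow hle) (by linarith)
  have hIcc : Icc a (a + h) ⊆ Icc 0 1 := Icc_subset_Icc ha hah
  refine abs_diffQuot_sub_deriv_le hh (hu.continuousOn.mono hIcc)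
    (fun t ht ↦ hasDerivAt_du ((hu.differentiableOn one_ne_zero).mono Ioc_subset_Icc_self)
      (Ioo_subset_Ioo ha hah ht)) fun t ht ↦ ?_
  have htx : |t - x| ≤ h :=
    abs_sub_le_iff.2 ⟨by linarith [ht.2, hx.1], by linarith [ht.1, hx.2]⟩
  calc |du u t - du u x| ≤ C / (δ - 1) * |t - x| ^ (δ - 1) :=
        abs_sub_le_rpow_of_abs_du_le hδ1 hδ2
          (hu.continuousOn_derivWithin (uniqueDiffOn_Icc one_pos) le_rfl) hu' hle
          (hIcc hx) (hIcc (Ioo_subset_Icc_self ht))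
    _ ≤ C / (δ - 1) * h ^ (δ - 1) := by gcongr

lemma abs_backwardDiff_one_sub_du_le (hδ : δ ≤ 2) (hu : ContDiffOn ℝ 1 u (Icc 0 1))
    (hu' : DifferentiableOn ℝ (du u) (Ioc 0 1))
    (hle : ∀ t ∈ Ioc (0 : ℝ) 1, |du (du u) t| ≤ C * t ^ (δ - 2))
    (hh : 0 < h) (hh2 : h ≤ 1 / 2) :
    |(u 1 - u (1 - h)) / h - du u 1| ≤ C * (1 / 2) ^ (δ - 2) * h := by
  have hC : 0 ≤ C := nonneg_of_abs_le_mul_rpow hle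
  have hIcc : Icc (1 / 2 : ℝ) 1 ⊆ Ioc 0 1 := Icc_subset_Ioc (by norm_num) le_rfl
  suffices |(u (1 - h + h) - u (1 - h)) / h - du u 1| ≤ C * (1 / 2) ^ (δ - 2) * h by
    rwa [sub_add_cancel] at this
  refine abs_diffQuot_sub_deriv_le hh
    (hu.continuousOn.mono (Icc_subset_Icc (by linarith) (by linarith)))
    (fun t ht ↦ hasDerivAt_du ((hu.differentiableOn one_ne_zero).mono Ioc_subset_Icc_self)
      ⟨by linarith [ht.1], by linarith [ht.2]⟩) fun t ht ↦ ?_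
  have ht1 : |t - 1| ≤ h := abs_sub_le_iff.2 ⟨by linarith [ht.2], by linarith [ht.1]⟩
  calc |du u t - du u 1| ≤ C * (1 / 2) ^ (δ - 2) * |t - 1| :=
        abs_sub_le_mul_of_abs_deriv_le_rpow (by linarith) hC one_half_pos
          (fun s hs ↦ (hasDerivWithinAt_du hu' (hIcc hs)).mono (hIcc.trans Ioc_subset_Icc_self))
          (fun s hs ↦ hle s (hIcc hs)) ⟨one_half_lt_one.le, le_rfl⟩
          ⟨by linarith [ht.1], by linarith [ht.2]⟩
    _ ≤ C * (1 / 2) ^ (δ - 2) * h := by gcongr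

/-- The upwind difference quotient `D^ℵ u(x)` with step `h`, for a convection coefficient whose
value at `x` is `β`. -/
noncomputable def upwindDiff (β : ℝ) (u : ℝ → ℝ) (h x : ℝ) : ℝ :=
  if β < 0 then (u (x + h) - u x) / h else (u x - u (x - h)) / h

lemma abs_upwindDiff_sub_du_le (hδ1 : 1 < δ) (hδ2 : δ ≤ 2) (hu : ContDiffOn ℝ 1 u (Icc 0 1))
    (hu' : DifferentiableOn ℝ (du u) (Ioc 0 1))
    (hle : ∀ t ∈ Ioc (0 : ℝ) 1, |du (du u) t| ≤ C * t ^ (δ - 2))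
    (hh : 0 < h) (hhx : h ≤ x) (hx1 : x + h ≤ 1) (β : ℝ) :
    |upwindDiff β u h x - du u x| ≤ C / (δ - 1) * h ^ (δ - 1) := by
  unfold upwindDiff
  split_ifs
  · exact abs_diffQuot_sub_du_le hδ1 hδ2 hu hu' hle hh (by linarith) hx1 ⟨le_rfl, by linarith⟩
  · have hback := abs_diffQuot_sub_du_le hδ1 hδ2 hu hu' hle hh (a := x - h) (x := x)
      (by linarith) (by linarith) ⟨by linarith, by linarith⟩
    rwa [sub_add_cancel] at hback

lemma abs_secondDiff_le (hδ1 : 1 < δ) (hδ2 : δ ≤ 2) (hu : ContDiffOn ℝ 1 u (Icc 0 1))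
    (hu' : DifferentiableOn ℝ (du u) (Ioc 0 1))
    (hle : ∀ t ∈ Ioc (0 : ℝ) 1, |du (du u) t| ≤ C * t ^ (δ - 2))
    (hh : 0 < h) (ha : 0 ≤ a) (hah : a + 2 * h ≤ 1) :
    |secondDiff u h a| ≤ C / (δ - 1) * h ^ δ := by
  obtain ⟨ξ, hξ, hdiff⟩ := exists_secondDiff_eq_mul_sub hh
    (hu.continuousOn.mono (Icc_subset_Icc ha hah)) fun t ht ↦
      hasDerivAt_du ((hu.differentiableOn one_ne_zero).mono Ioc_subset_Icc_self)
        (Ioo_subset_Ioo ha hah ht)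
  have hholder := abs_sub_le_rpow_of_abs_du_le hδ1 hδ2
    (hu.continuousOn_derivWithin (uniqueDiffOn_Icc one_pos) le_rfl) hu' hle
    (x := ξ) (y := ξ + h) ⟨by linarith [hξ.1], by linarith [hξ.2]⟩
    ⟨by linarith [hξ.1], by linarith [hξ.2]⟩
  rw [add_sub_cancel_left, abs_of_pos hh] at hholder
  rw [hdiff, abs_mul, abs_of_pos hh, show δ = δ - 1 + 1 by ring, Real.rpow_add_one hh.ne',
    ← mul_assoc, sub_add_cancel]
  exact mul_le_mul_of_nonneg_right hholder hh.le

end DifferenceQuotients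

section CaputoQuadrature

variable {δ C h : ℝ} {u : ℝ → ℝ} {j k : ℕ}

/-- The discretization of the Caputo derivative of order `δ` at the mesh point `j h`: on each cell
`[k h, (k + 1) h]` the factor `u''` of the integrand is replaced by `secondDiff u h (k h) / h ^ 2`
and the kernel is integrated exactly. -/
noncomputable def caputoQuadrature (δ : ℝ) (u : ℝ → ℝ) (h : ℝ) (j : ℕ) : ℝ :=
  1 / (h ^ δ * Real.Gamma (3 - δ)) *
    ∑ k ∈ Finset.range j, dCoef δ (j - k) * secondDiff u h (k * h)

/-- The contribution of the cell `[k h, (k + 1) h]` to the error of `caputoQuadrature` at `j h`,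
up to the factor `1 / Γ(2 - δ)`. -/
noncomputable def cellError (δ : ℝ) (u : ℝ → ℝ) (h : ℝ) (j k : ℕ) : ℝ :=
  (∫ t in (k * h)..((k + 1 : ℕ) * h), (j * h - t) ^ (1 - δ) * du (du u) t) -
    h ^ (2 - δ) / (2 - δ) * dCoef δ (j - k) * (secondDiff u h (k * h) / h ^ 2)

lemma intervalIntegrable_caputo_cell (hδ1 : 1 < δ) (hδ2 : δ < 2)
    (hu'' : ContinuousOn (du (du u)) (Ioc 0 1))
    (hle : ∀ t ∈ Ioc (0 : ℝ) 1, |du (du u) t| ≤ C * t ^ (δ - 2))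
    (hh : 0 < h) (hjh : j * h ≤ 1) (hkj : k < j) :
    IntervalIntegrable (fun t ↦ (j * h - t) ^ (1 - δ) * du (du u) t) volume
      (k * h) ((k + 1 : ℕ) * h) := by
  have hj : (0 : ℝ) < j := by exact_mod_cast (Nat.zero_le k).trans_lt hkj
  have hIoc : Ioc 0 (j * h) ⊆ Ioc 0 1 := Ioc_subset_Ioc_right hjh
  refine (intervalIntegrable_sub_rpow_mul (by linarith) (by linarith) (mul_pos hj hh)
    (hu''.mono hIoc) fun t ht ↦ hle t (hIoc ht)).mono_set ?_
  rw [uIcc_of_le (by gcongr; exact k.le_succ), uIcc_of_le (by positivity)]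
  exact Icc_subset_Icc (by positivity) (by gcongr; exact hkj)

lemma caputoW_sub_caputoQuadrature_eq (hδ1 : 1 < δ) (hδ2 : δ < 2)
    (hu'' : ContinuousOn (du (du u)) (Ioc 0 1))
    (hle : ∀ t ∈ Ioc (0 : ℝ) 1, |du (du u) t| ≤ C * t ^ (δ - 2))
    (hh : 0 < h) (hjh : j * h ≤ 1) :
    caputoW δ u (j * h) - caputoQuadrature δ u h j =
      1 / Real.Gamma (2 - δ) * ∑ k ∈ Finset.range j, cellError δ u h j k := by
  have hcells := intervalIntegral.sum_integral_adjacent_intervals (a := fun k : ℕ ↦ k * h)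
    fun k hk ↦ intervalIntegrable_caputo_cell hδ1 hδ2 hu'' hle hh hjh hk
  have hGamma : Real.Gamma (3 - δ) = (2 - δ) * Real.Gamma (2 - δ) := by
    rw [← Real.Gamma_add_one (by linarith)]
    ring_nf
  have hpow : h ^ (2 - δ) = h ^ 2 / h ^ δ := by rw [Real.rpow_sub hh, Real.rpow_two]
  have hweight (k : ℕ) : h ^ (2 - δ) / (2 - δ) * dCoef δ (j - k) * (secondDiff u h (k * h) / h ^ 2)
      = 1 / (h ^ δ * (2 - δ)) * (dCoef δ (j - k) * secondDiff u h (k * h)) := by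
    rw [hpow]
    field_simp
  simp only [cellError, hweight, Finset.sum_sub_distrib, ← Finset.mul_sum]
  rw [hcells, Nat.cast_zero, zero_mul, mul_sub, caputoW, caputoQuadrature, hGamma]
  field_simp

lemma abs_cellError_zero_le (hδ1 : 1 < δ) (hδ2 : δ < 2) (hu : ContDiffOn ℝ 1 u (Icc 0 1))
    (hu' : DifferentiableOn ℝ (du u) (Ioc 0 1))
    (hle : ∀ t ∈ Ioc (0 : ℝ) 1, |du (du u) t| ≤ C * t ^ (δ - 2))
    (hh : 0 < h) (hh2 : 2 * h ≤ 1) (hj : 1 ≤ j) :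
    |cellError δ u h j 0| ≤
      (C * (∫ t in (0 : ℝ)..1, (1 - t) ^ (1 - δ) * t ^ (δ - 2)) + C / (δ - 1) / (2 - δ)) *
        (j : ℝ) ^ (1 - δ) := by
  have h2δ : 0 < 2 - δ := sub_pos.2 hδ2
  have hintegral : |∫ t in (0 : ℝ)..h, (j * h - t) ^ (1 - δ) * du (du u) t| ≤
      C * (j : ℝ) ^ (1 - δ) * ∫ t in (0 : ℝ)..1, (1 - t) ^ (1 - δ) * t ^ (δ - 2) := by
    have hbeta := abs_integral_mul_sub_rpow_mul_le (r := 1 - δ) (by linarith) (by linarith)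
      (by linarith) hh (Nat.one_le_cast.2 hj)
      fun t (ht : t ∈ Ioc 0 h) ↦ hle t (Ioc_subset_Ioc_right (by linarith) ht)
    rwa [show 1 - δ + (δ - 2) + 1 = 0 by ring, Real.rpow_zero, one_mul] at hbeta
  have hquadrature : |h ^ (2 - δ) / (2 - δ) * dCoef δ j * (secondDiff u h 0 / h ^ 2)| ≤
      C / (δ - 1) / (2 - δ) * (j : ℝ) ^ (1 - δ) := by
    have hpow : h ^ (2 - δ) = h ^ 2 / h ^ δ := by rw [Real.rpow_sub hh, Real.rpow_two]
    have hweight : 0 ≤ h ^ (2 - δ) / (2 - δ) := by positivity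
    rw [abs_mul, abs_mul, abs_div (secondDiff u h 0), abs_of_nonneg hweight,
      abs_of_nonneg (dCoef_nonneg hδ2.le j), abs_of_pos (pow_pos hh 2)]
    calc h ^ (2 - δ) / (2 - δ) * dCoef δ j * (|secondDiff u h 0| / h ^ 2)
        ≤ h ^ (2 - δ) / (2 - δ) * (j : ℝ) ^ (1 - δ) * (C / (δ - 1) * h ^ δ / h ^ 2) := by
          gcongr
          · exact dCoef_le_rpow hδ1.le hj
          · exact abs_secondDiff_le hδ1 hδ2.le hu hu' hle hh le_rfl (by linarith)
      _ = C / (δ - 1) / (2 - δ) * (j : ℝ) ^ (1 - δ) := by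
          rw [hpow]
          field_simp
  simp only [cellError, Nat.cast_zero, zero_mul, zero_add, Nat.cast_one, one_mul, Nat.sub_zero]
  exact ((abs_sub _ _).trans (add_le_add hintegral hquadrature)).trans_eq (by ring)

lemma abs_du_du_sub_secondDiff_div_le {a t : ℝ} (hδ : δ ≤ 3) (hu : ContDiffOn ℝ 1 u (Icc 0 1))
    (hu' : DifferentiableOn ℝ (du u) (Ioc 0 1)) (hu'' : DifferentiableOn ℝ (du (du u)) (Ioc 0 1))
    (hle : ∀ t ∈ Ioc (0 : ℝ) 1, |du (du (du u)) t| ≤ C * t ^ (δ - 3))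
    (hh : 0 < h) (ha : 0 < a) (hah : a + 2 * h ≤ 1) (ht : t ∈ Icc a (a + 2 * h)) :
    |du (du u) t - secondDiff u h a / h ^ 2| ≤ C * a ^ (δ - 3) * (2 * h) := by
  have hC : 0 ≤ C := nonneg_of_abs_le_mul_rpow hle
  have hIoo : Ioo a (a + 2 * h) ⊆ Ioo 0 1 := Ioo_subset_Ioo ha.le hah
  have hIcc : Icc a (a + 2 * h) ⊆ Ioc 0 1 := Icc_subset_Ioc ha hah
  obtain ⟨η, hη, hdiff⟩ := exists_secondDiff_eq_mul_sq hh
    (hu.continuousOn.mono (Icc_subset_Icc ha.le hah))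
    (fun s hs ↦ hasDerivAt_du ((hu.differentiableOn one_ne_zero).mono Ioc_subset_Icc_self)
      (hIoo hs)) fun s hs ↦ hasDerivAt_du hu' (hIoo hs)
  have htη : |t - η| ≤ 2 * h :=
    abs_sub_le_iff.2 ⟨by linarith [ht.2, hη.1], by linarith [ht.1, hη.2]⟩
  rw [hdiff, mul_div_cancel_right₀ _ (pow_pos hh 2).ne']
  calc |du (du u) t - du (du u) η| ≤ C * a ^ (δ - 3) * |t - η| :=
        abs_sub_le_mul_of_abs_deriv_le_rpow (by linarith) hC ha
          (fun s hs ↦ (hasDerivWithinAt_du hu'' (hIcc hs)).mono (hIcc.trans Ioc_subset_Icc_self))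
          (fun s hs ↦ hle s (hIcc hs)) (Ioo_subset_Icc_self hη) ht
    _ ≤ C * a ^ (δ - 3) * (2 * h) := by gcongr

lemma abs_cellError_le (hδ1 : 1 < δ) (hδ2 : δ < 2) (hu : ContDiffOn ℝ 1 u (Icc 0 1))
    (hu' : DifferentiableOn ℝ (du u) (Ioc 0 1)) (hu'' : DifferentiableOn ℝ (du (du u)) (Ioc 0 1))
    (hle : ∀ t ∈ Ioc (0 : ℝ) 1, |du (du u) t| ≤ C * t ^ (δ - 2))
    (hle' : ∀ t ∈ Ioc (0 : ℝ) 1, |du (du (du u)) t| ≤ C * t ^ (δ - 3))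
    (hh : 0 < h) (hjh : (j + 1) * h ≤ 1) (hk : 1 ≤ k) (hkj : k < j) :
    |cellError δ u h j k| ≤ 2 * C / (2 - δ) * (dCoef δ (j - k) * (k : ℝ) ^ (δ - 3)) := by
  have hk0 : (0 : ℝ) < k := by exact_mod_cast hk
  have hkj' : (k : ℝ) + 1 ≤ j := by exact_mod_cast hkj
  have hnext : ((k + 1 : ℕ) : ℝ) * h = k * h + h := by push_cast; ring
  have hcell : (k : ℝ) * h + h ≤ j * h := by nlinarith
  have hscale : h ^ (2 - δ) * h ^ (δ - 3) * h = 1 := by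
    rw [← Real.rpow_add hh, ← Real.rpow_add_one hh.ne', show 2 - δ + (δ - 3) + 1 = 0 by ring,
      Real.rpow_zero]
  have herror := abs_integral_mul_sub_integral_mul_const_le (w := fun t ↦ (j * h - t) ^ (1 - δ))
    (c := secondDiff u h (k * h) / h ^ 2) (by linarith)
    (intervalIntegrable_sub_rpow (by linarith) _ _ _)
    (intervalIntegrable_caputo_cell hδ1 hδ2 hu''.continuousOn hle hh (by linarith) hkj)
    (fun t ht ↦ Real.rpow_nonneg (by linarith [ht.2]) _)
    fun t ht ↦ abs_du_du_sub_secondDiff_div_le (by linarith) hu hu' hu'' hle' hh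
      (mul_pos hk0 hh) (by linarith) ⟨ht.1.le, by linarith [ht.2]⟩
  rw [integral_kernel_cell_eq hδ2 hh.le hkj] at herror
  refine herror.trans_eq ?_
  rw [Real.mul_rpow hk0.le hh.le]
  linear_combination 2 * C / (2 - δ) * (dCoef δ (j - k) * (k : ℝ) ^ (δ - 3)) * hscale

lemma exists_abs_caputoW_sub_caputoQuadrature_le (hδ1 : 1 < δ) (hδ2 : δ < 2)
    (hu : ContDiffOn ℝ 1 u (Icc 0 1)) (hu' : DifferentiableOn ℝ (du u) (Ioc 0 1))
    (hu'' : DifferentiableOn ℝ (du (du u)) (Ioc 0 1))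
    (hle : ∀ t ∈ Ioc (0 : ℝ) 1, |du (du u) t| ≤ C * t ^ (δ - 2))
    (hle' : ∀ t ∈ Ioc (0 : ℝ) 1, |du (du (du u)) t| ≤ C * t ^ (δ - 3)) :
    ∃ K : ℝ, ∀ (h : ℝ) (j : ℕ), 0 < h → 1 ≤ j → (j + 1) * h ≤ 1 →
      |caputoW δ u (j * h) - caputoQuadrature δ u h j| ≤ K * (j : ℝ) ^ (1 - δ) := by
  obtain ⟨Z, hZ⟩ := exists_sum_dCoef_mul_rpow_le hδ1.le hδ2
  have hC : 0 ≤ C := nonneg_of_abs_le_mul_rpow hle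
  have hGamma : 0 < Real.Gamma (2 - δ) := Real.Gamma_pos_of_pos (sub_pos.2 hδ2)
  set A := C * (∫ t in (0 : ℝ)..1, (1 - t) ^ (1 - δ) * t ^ (δ - 2)) + C / (δ - 1) / (2 - δ)
  refine ⟨1 / Real.Gamma (2 - δ) * (A + 2 * C / (2 - δ) * Z), fun h j hh hj hjh ↦ ?_⟩
  have hj' : (1 : ℝ) ≤ j := by exact_mod_cast hj
  have hfirst : |cellError δ u h j 0| ≤ A * (j : ℝ) ^ (1 - δ) :=
    abs_cellError_zero_le hδ1 hδ2 hu hu' hle hh (by nlinarith) hj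
  have hrest : ∑ k ∈ Finset.Ico 1 j, |cellError δ u h j k| ≤
      2 * C / (2 - δ) * (Z * (j : ℝ) ^ (1 - δ)) := by
    calc ∑ k ∈ Finset.Ico 1 j, |cellError δ u h j k|
        ≤ 2 * C / (2 - δ) * ∑ k ∈ Finset.Ico 1 j, dCoef δ (j - k) * (k : ℝ) ^ (δ - 3) := by
          rw [Finset.mul_sum]
          refine Finset.sum_le_sum fun k hk ↦ ?_
          obtain ⟨hk1, hkj⟩ := Finset.mem_Ico.1 hk
          exact abs_cellError_le hδ1 hδ2 hu hu' hu'' hle hle' hh hjh hk1 hkj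
      _ ≤ _ := mul_le_mul_of_nonneg_left (hZ j hj) (div_nonneg (by linarith) (by linarith))
  rw [caputoW_sub_caputoQuadrature_eq hδ1 hδ2 hu''.continuousOn hle hh (by nlinarith), abs_mul,
    abs_of_pos (one_div_pos.2 hGamma), mul_assoc]
  gcongr
  calc |∑ k ∈ Finset.range j, cellError δ u h j k|
      ≤ |cellError δ u h j 0| + ∑ k ∈ Finset.Ico 1 j, |cellError δ u h j k| := by
        rw [← Finset.sum_range_eq_add_Ico (fun k ↦ |cellError δ u h j k|) hj]
        exact Finset.abs_sum_le_sum_abs _ _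
    _ ≤ (A + 2 * C / (2 - δ) * Z) * (j : ℝ) ^ (1 - δ) := by linarith

end CaputoQuadrature

section TruncationError

variable {δ α₀ α₁ C M : ℝ} {b c u : ℝ → ℝ} {N j : ℕ}

lemma trunc_zero_eq (δ α₀ α₁ : ℝ) (b c u : ℝ → ℝ) (N : ℕ) :
    trunc δ α₀ α₁ b c u N 0 =
      -α₀ * ((u (0 + 1 / N) - u 0) / (1 / N) - du u 0) := by
  simp only [trunc, if_true, Nat.cast_one, one_mul, Nat.cast_zero, zero_mul, zero_add]
  ring

lemma trunc_last_eq (δ α₀ α₁ : ℝ) (b c u : ℝ → ℝ) (hN : N ≠ 0) :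
    trunc δ α₀ α₁ b c u N N = α₁ * ((u 1 - u (1 - 1 / N)) / (1 / N) - du u 1) := by
  have hlast : (N : ℝ) * (1 / N) = 1 := mul_one_div_cancel (Nat.cast_ne_zero.2 hN)
  have hprev : ((N - 1 : ℕ) : ℝ) * (1 / N) = 1 - 1 / N := by
    rw [Nat.cast_sub (Nat.one_le_iff_ne_zero.2 hN), Nat.cast_one, sub_mul, hlast, one_mul]
  simp only [trunc, if_neg hN, if_true, hlast, hprev]
  ring

lemma trunc_interior_eq (δ α₀ α₁ : ℝ) (b c u : ℝ → ℝ) (hj : j ≠ 0) (hjN : j ≠ N) :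
    trunc δ α₀ α₁ b c u N j =
      caputoW δ u (j * (1 / N)) - caputoQuadrature δ u (1 / N) j +
        b (j * (1 / N)) *
          (upwindDiff (b (j * (1 / N))) u (1 / N) (j * (1 / N)) - du u (j * (1 / N))) := by
  have hnode (k i : ℕ) : ((k + i : ℕ) : ℝ) * (1 / N) = k * (1 / N) + i * (1 / N) := by
    push_cast
    ring
  have hprev : ((j - 1 : ℕ) : ℝ) * (1 / N) = j * (1 / N) - 1 / N := by
    rw [Nat.cast_sub (Nat.one_le_iff_ne_zero.2 hj), Nat.cast_one, sub_mul, one_mul]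
  simp only [trunc, if_neg hj, if_neg hjN, caputoQuadrature, upwindDiff, secondDiff, hnode, hprev,
    Nat.cast_one, Nat.cast_ofNat, one_mul]
  ring

lemma abs_trunc_zero_le (hδ1 : 1 < δ) (hδ2 : δ ≤ 2) (hu : ContDiffOn ℝ 1 u (Icc 0 1))
    (hu' : DifferentiableOn ℝ (du u) (Ioc 0 1))
    (hle : ∀ t ∈ Ioc (0 : ℝ) 1, |du (du u) t| ≤ C * t ^ (δ - 2)) (hN : 1 ≤ N) :
    |trunc δ α₀ α₁ b c u N 0| ≤ |α₀| * (C / (δ - 1)) * ((1 : ℝ) / N) ^ (δ - 1) := by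
  have hN' : (1 : ℝ) ≤ N := by exact_mod_cast hN
  have hh : 0 < (1 : ℝ) / N := by positivity
  have hh1 : (1 : ℝ) / N ≤ 1 := div_le_one_of_le₀ hN' (by positivity)
  rw [trunc_zero_eq, abs_mul, abs_neg, mul_assoc]
  gcongr
  exact abs_diffQuot_sub_du_le hδ1 hδ2 hu hu' hle hh le_rfl (by linarith) ⟨le_rfl, by linarith⟩

lemma abs_trunc_last_le (hδ : δ ≤ 2) (hu : ContDiffOn ℝ 1 u (Icc 0 1))
    (hu' : DifferentiableOn ℝ (du u) (Ioc 0 1))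
    (hle : ∀ t ∈ Ioc (0 : ℝ) 1, |du (du u) t| ≤ C * t ^ (δ - 2)) (hN : 2 ≤ N) :
    |trunc δ α₀ α₁ b c u N N| ≤ C * (1 / 2) ^ (δ - 2) * |α₁| * ((1 : ℝ) / N) := by
  have hN' : (2 : ℝ) ≤ N := by exact_mod_cast hN
  rw [trunc_last_eq _ _ _ _ _ _ (by omega), abs_mul, mul_right_comm, mul_comm |α₁|]
  gcongr
  exact abs_backwardDiff_one_sub_du_le hδ hu hu' hle (by positivity)
    (one_div_le_one_div_of_le two_pos hN')

lemma exists_abs_trunc_interior_le (hδ1 : 1 < δ) (hδ2 : δ < 2)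
    (hb : ∀ x ∈ Icc (0 : ℝ) 1, |b x| ≤ M) (hu : ContDiffOn ℝ 1 u (Icc 0 1))
    (hu' : DifferentiableOn ℝ (du u) (Ioc 0 1)) (hu'' : DifferentiableOn ℝ (du (du u)) (Ioc 0 1))
    (hle : ∀ t ∈ Ioc (0 : ℝ) 1, |du (du u) t| ≤ C * t ^ (δ - 2))
    (hle' : ∀ t ∈ Ioc (0 : ℝ) 1, |du (du (du u)) t| ≤ C * t ^ (δ - 3)) :
    ∃ K : ℝ, ∀ N j : ℕ, 1 ≤ j → j < N →
      |trunc δ α₀ α₁ b c u N j| ≤ K * (j : ℝ) ^ (1 - δ) := by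
  obtain ⟨K, hK⟩ := exists_abs_caputoW_sub_caputoQuadrature_le hδ1 hδ2 hu hu' hu'' hle hle'
  refine ⟨K + M * (C / (δ - 1)), fun N j hj hjN ↦ ?_⟩
  have hM : 0 ≤ M := (abs_nonneg _).trans (hb 0 ⟨le_rfl, zero_le_one⟩)
  have hC : 0 ≤ C / (δ - 1) := div_nonneg (nonneg_of_abs_le_mul_rpow hle) (by linarith)
  have hj' : (1 : ℝ) ≤ j := by exact_mod_cast hj
  have hjN' : (j : ℝ) + 1 ≤ N := by exact_mod_cast hjN
  have hN : (0 : ℝ) < N := by linarith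
  rw [trunc_interior_eq _ _ _ _ _ _ (by omega) hjN.ne]
  set h : ℝ := 1 / N with hdef
  have hh : 0 < h := by positivity
  have hjh : (j + 1) * h ≤ 1 := by rwa [hdef, mul_one_div, div_le_one hN]
  have hstep : h ^ (δ - 1) ≤ (j : ℝ) ^ (1 - δ) := by
    rw [hdef, one_div, Real.inv_rpow hN.le, ← Real.rpow_neg hN.le, neg_sub]
    exact Real.rpow_le_rpow_of_nonpos (by linarith) (by linarith) (by linarith)
  have hupwind : |upwindDiff (b (j * h)) u h (j * h) - du u (j * h)| ≤
      C / (δ - 1) * (j : ℝ) ^ (1 - δ) :=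
    (abs_upwindDiff_sub_du_le hδ1 hδ2.le hu hu' hle hh (by nlinarith) (by linarith) _).trans
      (mul_le_mul_of_nonneg_left hstep hC)
  have hconvection := mul_le_mul (hb (j * h) ⟨by positivity, by linarith⟩) hupwind
    (abs_nonneg _) hM
  rw [← abs_mul] at hconvection
  calc _ ≤ _ := abs_add_le _ _
    _ ≤ _ := add_le_add (hK h j hh hj hjh) hconvection
    _ = _ := by ring

end TruncationError

theorem stmt17_general (δ : ℝ) (hδ1 : 1 < δ) (hδ2 : δ < 2) (α₀ α₁ : ℝ) (hα₁ : 0 ≤ α₁)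
    (b c : ℝ → ℝ) (M : ℝ) (hb : ∀ x ∈ Icc (0 : ℝ) 1, |b x| ≤ M)
    (u : ℝ → ℝ) (hu : ContDiffOn ℝ 1 u (Icc 0 1)) (hu' : DifferentiableOn ℝ (du u) (Ioc 0 1))
    (hu'' : DifferentiableOn ℝ (du (du u)) (Ioc 0 1)) (C₀ : ℝ)
    (hu2b : ∀ x ∈ Ioc (0 : ℝ) 1, |du (du u) x| ≤ C₀ * x ^ (δ - 2))
    (hu3b : ∀ x ∈ Ioc (0 : ℝ) 1, |du (du (du u)) x| ≤ C₀ * x ^ (δ - 3)) :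
    ∃ C : ℝ, ∀ N : ℕ, 2 ≤ N →
      |trunc δ α₀ α₁ b c u N 0| ≤ C * ((1 : ℝ) / N) ^ (δ - 1) ∧
      |trunc δ α₀ α₁ b c u N 1| ≤ C ∧
      (∀ j : ℕ, 2 ≤ j → j ≤ N - 1 →
        |trunc δ α₀ α₁ b c u N j| ≤ C * ((j : ℝ) - 1) ^ (1 - δ)) ∧
      |trunc δ α₀ α₁ b c u N N| ≤ C * α₁ * ((1 : ℝ) / N) := by
  obtain ⟨K, hK⟩ := exists_abs_trunc_interior_le (α₀ := α₀) (α₁ := α₁) (c := c) hδ1 hδ2 hb hu hu'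
    hu'' hu2b hu3b
  set K₀ := |α₀| * (C₀ / (δ - 1))
  set K₁ := C₀ * (1 / 2) ^ (δ - 2)
  refine ⟨max K₀ (max K K₁), fun N hN ↦ ⟨?_, ?_, fun j hj hjN ↦ ?_, ?_⟩⟩
  · refine (abs_trunc_zero_le hδ1 hδ2.le hu hu' hu2b (by omega)).trans ?_
    gcongr
    exact le_max_left _ _
  · have hone := hK N 1 le_rfl hN
    rw [Nat.cast_one, Real.one_rpow, mul_one] at hone
    exact hone.trans (by simp)
  · have hj' : (2 : ℝ) ≤ j := by exact_mod_cast hj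
    have hK0 : 0 ≤ max K₀ (max K K₁) := le_max_of_le_right <| le_max_of_le_right <|
      mul_nonneg (nonneg_of_abs_le_mul_rpow hu2b) (by positivity)
    refine (hK N j (by omega) (by omega)).trans (mul_le_mul (by simp) ?_ (by positivity) hK0)
    exact Real.rpow_le_rpow_of_nonpos (by linarith) (by linarith) (by linarith)
  · refine (abs_trunc_last_le hδ2.le hu hu' hu2b hN).trans ?_
    rw [abs_of_nonneg hα₁]
    gcongr
    exact le_max_of_le_right (le_max_right _ _)

theorem stmt17 (δ : ℝ) (hδ1 : 1 < δ) (hδ2 : δ < 2)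
    (α₀ α₁ : ℝ) (hα₀ : 0 ≤ α₀) (hα₁ : 0 ≤ α₁)
    (b c : ℝ → ℝ) (hb : ContinuousOn b (Set.Icc 0 1)) (hc : ContinuousOn c (Set.Icc 0 1))
    (u : ℝ → ℝ) (hu1 : ContDiffOn ℝ 1 u (Set.Icc 0 1)) (hu3 : ContDiffOn ℝ 3 u (Set.Ioc 0 1))
    (C₀ : ℝ)
    (hu2b : ∀ x ∈ Set.Ioc (0:ℝ) 1, |du (du u) x| ≤ C₀ * x ^ (δ - 2))
    (hu3b : ∀ x ∈ Set.Ioc (0:ℝ) 1, |du (du (du u)) x| ≤ C₀ * x ^ (δ - 3)) :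
    ∃ C : ℝ, ∀ N : ℕ, 2 ≤ N →
      |trunc δ α₀ α₁ b c u N 0| ≤ C * ((1:ℝ) / N) ^ (δ - 1) ∧
      |trunc δ α₀ α₁ b c u N 1| ≤ C ∧
      (∀ j : ℕ, 2 ≤ j → j ≤ N - 1 →
        |trunc δ α₀ α₁ b c u N j| ≤ C * ((j:ℝ) - 1) ^ (1 - δ)) ∧
      |trunc δ α₀ α₁ b c u N N| ≤ C * α₁ * ((1:ℝ) / N) := by
  obtain ⟨M, hM⟩ := isCompact_Icc.exists_bound_of_continuousOn hb
  have hu' : ContDiffOn ℝ 2 (du u) (Ioc 0 1) := contDiffOn_du (n := 2) hu3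
  exact stmt17_general δ hδ1 hδ2 α₀ α₁ hα₁ b c M hM u hu1 (hu'.differentiableOn two_ne_zero)
    ((contDiffOn_du (n := 1) hu').differentiableOn one_ne_zero) C₀ hu2b hu3b
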